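/- Let P be a normal logic program over its finite set of atoms a_1, …, a_n, let ⊗ be a t-norm and ⊕ a t-conorm, and let S ⊆ {a_1, …, a_n} be a stable model of P. Then there exist finitely many binary decision vectors δ^1, …, δ^m ∈ {0,1}^n such that the NDProp run defined by τ^0 = 𝒞_{P,0}^∞(0), φ^0 = 0, and for t ≥ 1: μ^{t-1} = (1−τ^{t-1}) ⊗ (1−φ^{t-1}) componentwise, φ^t = φ^{t-1} + (μ^{t-1} ⊙ δ^t), τ^t = 𝒞_{P,φ^t}^∞(τ^{t-1}), terminates with binary terminal degrees (τ^m_i, φ^m_i) ∈ {(1,0),(0,1)} for every i, binary membership score p with p_i = (τ^m_i + 1 − φ^m_i)/2 ∈ {0,1}, and [p] = S. -/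

import Mathlib

instance : Fact ((0:ℝ) ≤ 1) := ⟨zero_le_one⟩

/-- A rule of a normal logic program: head atom, positive body atoms, default-negated body atoms. -/
structure Rule (α : Type) where
  head : α
  pos : Finset α
  neg : Finset α
deriving DecidableEq

/-- A t-norm on the unit interval: commutative, associative, monotone in each argument,
with unit `1`. -/
structure Tnorm where
  f : unitInterval → unitInterval → unitInterval
  comm : ∀ x y, f x y = f y x
  assoc : ∀ x y z, f (f x y) z = f x (f y z)
  mono : ∀ ⦃x x' y y'⦄, x ≤ x' → y ≤ y' → f x y ≤ f x' y'
  one_left : ∀ x, f 1 x = x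

/-- A t-conorm on the unit interval: commutative, associative, monotone in each argument,
with unit `0`. -/
structure Tconorm where
  f : unitInterval → unitInterval → unitInterval
  comm : ∀ x y, f x y = f y x
  assoc : ∀ x y z, f (f x y) z = f x (f y z)
  mono : ∀ ⦃x x' y y'⦄, x ≤ x' → y ≤ y' → f x y ≤ f x' y'
  zero_left : ∀ x, f 0 x = x

instance (t : Tnorm) : Std.Commutative t.f := ⟨t.comm⟩
instance (t : Tnorm) : Std.Associative t.f := ⟨t.assoc⟩
instance (s : Tconorm) : Std.Commutative s.f := ⟨s.comm⟩
instance (s : Tconorm) : Std.Associative s.f := ⟨s.assoc⟩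

/-- ⊗-product of `g` over a finite set (empty product = `1`). -/
def tnormProd {β : Type} (t : Tnorm) (g : β → unitInterval) (s : Finset β) : unitInterval :=
  s.fold t.f 1 g

/-- ⊕-sum of `g` over a finite set (empty sum = `0`). -/
def tconormSum {β : Type} (s : Tconorm) (g : β → unitInterval) (q : Finset β) : unitInterval :=
  q.fold s.f 0 g

/-- Support `ρ(τ,φ)` of a rule: the ⊗-product of the values of all its body literals,
where `val(a) = τ a` and `val(not a) = φ a`. -/
def support {α : Type} (t : Tnorm) (τ φ : α → unitInterval) (r : Rule α) : unitInterval :=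
  t.f (tnormProd t τ r.pos) (tnormProd t φ r.neg)

/-- The soft immediate consequence operator `𝒞_{P,φ}(τ)`: for each atom `a`, the ⊕-sum of
the supports of all rules with head `a`. -/
def softC {α : Type} [DecidableEq α] (t : Tnorm) (s : Tconorm) (P : Finset (Rule α))
    (φ τ : α → unitInterval) : α → unitInterval :=
  fun a => tconormSum s (support t τ φ) (P.filter fun r => r.head = a)

/-- The set induced by a degree vector: `[ψ] = { a | ψ a = 1 }`. -/
def induced {α : Type} (ψ : α → unitInterval) : Set α := { a | ψ a = 1 }

/-- The undecided degree `μ = (1 − τ) ⊗ (1 − φ)` (componentwise). -/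
def undec {α : Type} (t : Tnorm) (τ φ : α → unitInterval) : α → unitInterval :=
  fun a => t.f (unitInterval.symm (τ a)) (unitInterval.symm (φ a))

/-- The Gelfond–Lifschitz reduct `P^S`. -/
def reduct {α : Type} (P : Finset (Rule α)) (S : Set α) : Set (Rule α) :=
  { r' | ∃ r ∈ P, (∀ b ∈ r.neg, b ∉ S) ∧ r' = ⟨r.head, r.pos, ∅⟩ }

/-- `M` is a model of the set of rules `Q`. -/
def isModel {α : Type} (Q : Set (Rule α)) (M : Set α) : Prop :=
  ∀ r ∈ Q, ↑r.pos ⊆ M → (∀ b ∈ r.neg, b ∉ M) → r.head ∈ M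

/-- `S` is a stable model of `P`: `S` is the least model of the reduct `P^S`. -/
def isStableModel {α : Type} (P : Finset (Rule α)) (S : Set α) : Prop :=
  isModel (reduct P S) S ∧ ∀ M : Set α, isModel (reduct P S) M → S ⊆ M

/-!
On indicator vectors every t-norm is conjunction and every t-conorm is disjunction, so there `softC`
is the crisp consequence operator `consequence P N`, with `N` the set of atoms decided false. Its
iterates from a post-fixed point below its least fixed point reach that fixed point, because its
values are sets of heads of the finite program. Hence `τ⁰` is `T = lfp (consequence P ∅)`,
whereas `S` is stable iff `S = lfp (consequence P Sᶜ)`. As `T ⊆ S`, no atom outside `S` is decided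
at the start, and the single decision `δ¹ = Sᶜ` makes all of them false at once; propagation
from `T` then stops exactly at `S`.
-/

theorem exists_forall_ge_eq_of_monotone_of_finite_range {β : Type*} [PartialOrder β] {u : ℕ → β}
    (hu : Monotone u) (hfin : (Set.range u).Finite) : ∃ m, ∀ j ≥ m, u j = u m := by
  obtain ⟨_, ⟨m, rfl⟩, hm⟩ := hfin.exists_maximal (Set.range_nonempty u)
  exact ⟨m, fun j hj => (hm ⟨j, rfl⟩ (hu hj)).antisymm (hu hj)⟩

theorem exists_forall_ge_iterate_eq_lfp {β : Type*} [CompleteLattice β] (f : β →o β)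
    (hfin : (Set.range f).Finite) {x : β} (hx : x ≤ f x) (hx_lfp : x ≤ f.lfp) :
    ∃ m, ∀ j ≥ m, f^[j] x = f.lfp := by
  have range_subset : (Set.range fun j => f^[j] x) ⊆ insert x (Set.range f) := by
    rintro _ ⟨_ | j, rfl⟩
    · exact Set.mem_insert _ _
    · exact Or.inr ⟨f^[j] x, (Function.iterate_succ_apply' f j x).symm⟩
  obtain ⟨m, hm⟩ := exists_forall_ge_eq_of_monotone_of_finite_range
    (f.monotone.monotone_iterate_of_le_map hx) ((hfin.insert x).subset range_subset)
  have le_lfp : f^[m] x ≤ f.lfp :=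
    (f.monotone.iterate m hx_lfp).trans_eq (Function.IsFixedPt.iterate f.map_lfp m)
  have map_eq : f (f^[m] x) = f^[m] x := by
    rw [← Function.iterate_succ_apply' f, hm _ m.le_succ]
  exact ⟨m, fun j hj => (hm j hj).trans (le_lfp.antisymm (f.lfp_le map_eq.le))⟩

section CrispDegrees

theorem Tnorm.zero_left (t : Tnorm) (x : unitInterval) : t.f 0 x = 0 :=
  le_bot_iff.1 <| calc
    t.f 0 x ≤ t.f 0 1 := t.mono le_rfl le_top
    _ = 0 := by rw [t.comm, t.one_left]

theorem Tconorm.one_left (s : Tconorm) (x : unitInterval) : s.f 1 x = 1 :=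
  top_le_iff.1 <| calc
    1 = s.f 1 0 := by rw [s.comm, s.zero_left]
    _ ≤ s.f 1 x := s.mono le_rfl bot_le

theorem Tnorm.f_ite (t : Tnorm) (p q : Prop) [Decidable p] [Decidable q] :
    t.f (if p then 1 else 0) (if q then 1 else 0) = if p ∧ q then 1 else 0 := by
  by_cases hp : p <;> simp [hp, t.one_left, t.zero_left]

theorem Tconorm.f_ite (s : Tconorm) (p q : Prop) [Decidable p] [Decidable q] :
    s.f (if p then 1 else 0) (if q then 1 else 0) = if p ∨ q then 1 else 0 := by
  by_cases hp : p <;> simp [hp, s.one_left, s.zero_left]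

open Classical in
theorem tnormProd_indicator {β : Type} (t : Tnorm) (A : Set β) (F : Finset β) :
    tnormProd t (A.indicator 1) F = if ↑F ⊆ A then 1 else 0 := by
  unfold tnormProd
  induction F using Finset.induction_on with
  | empty => simp
  | insert a F ha ih =>
    rw [Finset.fold_insert ha, ih, Set.indicator_apply, Pi.one_apply, t.f_ite]
    simp only [Finset.coe_insert, Set.insert_subset_iff]

open Classical in
theorem tconormSum_indicator {β : Type} (s : Tconorm) (A : Set β) (F : Finset β) :
    tconormSum s (A.indicator 1) F = if ∃ b ∈ F, b ∈ A then 1 else 0 := by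
  unfold tconormSum
  induction F using Finset.induction_on with
  | empty => simp
  | insert a F ha ih =>
    rw [Finset.fold_insert ha, ih, Set.indicator_apply, Pi.one_apply, s.f_ite]
    simp only [Finset.exists_mem_insert]

variable {α : Type}

theorem support_indicator (t : Tnorm) (N A : Set α) :
    support t (A.indicator 1) (N.indicator 1) =
      {r : Rule α | ↑r.pos ⊆ A ∧ ↑r.neg ⊆ N}.indicator 1 := by
  classical
  funext r
  simp only [support, tnormProd_indicator, t.f_ite, Set.indicator_apply, Set.mem_ofPred_eq,
    Pi.one_apply]

end CrispDegrees

section Consequence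

variable {α : Type}

/-- The two-valued immediate consequence operator of `P`: the heads of the rules whose positive body
holds in `A` and whose default-negated atoms all lie in the set `N` of atoms decided false. The set
`N` is a parameter independent of `A`, which makes the operator monotone in both. -/
def consequence (P : Finset (Rule α)) : Set α →o Set α →o Set α where
  toFun N :=
    { toFun := fun A => {a | ∃ r ∈ P, r.head = a ∧ ↑r.pos ⊆ A ∧ ↑r.neg ⊆ N}
      monotone' := fun _ _ hA _ ⟨r, hr, hhead, hpos, hneg⟩ =>
        ⟨r, hr, hhead, hpos.trans hA, hneg⟩ }
  monotone' := fun _ _ hN _ _ ⟨r, hr, hhead, hpos, hneg⟩ =>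
    ⟨r, hr, hhead, hpos, hneg.trans hN⟩

theorem mem_consequence {P : Finset (Rule α)} {N A : Set α} {a : α} :
    a ∈ consequence P N A ↔ ∃ r ∈ P, r.head = a ∧ ↑r.pos ⊆ A ∧ ↑r.neg ⊆ N :=
  Iff.rfl

theorem finite_range_consequence (P : Finset (Rule α)) (N : Set α) :
    (Set.range (consequence P N)).Finite := by
  refine (P.finite_toSet.image Rule.head).finite_subsets.subset ?_
  rintro _ ⟨A, rfl⟩ a ⟨r, hr, hhead, -⟩
  exact ⟨r, hr, hhead⟩

theorem softC_indicator [DecidableEq α] (t : Tnorm) (s : Tconorm) (P : Finset (Rule α))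
    (N A : Set α) :
    softC t s P (N.indicator 1) (A.indicator 1) = (consequence P N A).indicator 1 := by
  classical
  funext a
  simp only [softC, support_indicator, tconormSum_indicator, Set.indicator_apply, mem_consequence,
    Finset.mem_filter, Set.mem_ofPred_eq, and_assoc, Pi.one_apply]

theorem iterate_softC_indicator [DecidableEq α] (t : Tnorm) (s : Tconorm) (P : Finset (Rule α))
    (N A : Set α) (j : ℕ) :
    (softC t s P (N.indicator 1))^[j] (A.indicator 1) =
      ((consequence P N)^[j] A).indicator 1 :=
  have semiconj : Function.Semiconj (fun B : Set α => B.indicator (1 : α → unitInterval))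
      (consequence P N) (softC t s P (N.indicator 1)) :=
    fun B => (softC_indicator t s P N B).symm
  (semiconj.iterate_right j A).symm

theorem exists_forall_ge_iterate_softC_eq_lfp [DecidableEq α] (t : Tnorm) (s : Tconorm)
    (P : Finset (Rule α)) {N A : Set α} (hA : A ⊆ consequence P N A)
    (hA_lfp : A ⊆ (consequence P N).lfp) :
    ∃ m, ∀ j ≥ m, (softC t s P (N.indicator 1))^[j] (A.indicator 1) =
      (consequence P N).lfp.indicator 1 := by
  obtain ⟨m, hm⟩ :=
    exists_forall_ge_iterate_eq_lfp (consequence P N) (finite_range_consequence P N) hA hA_lfp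
  exact ⟨m, fun j hj => by rw [iterate_softC_indicator, hm j hj]⟩

theorem lfp_consequence_mono (P : Finset (Rule α)) {N N' : Set α} (hN : N ⊆ N') :
    (consequence P N).lfp ⊆ (consequence P N').lfp :=
  OrderHom.lfp.monotone ((consequence P).monotone hN)

theorem exists_forall_ge_iterate_softC_lfp_eq_lfp [DecidableEq α] (t : Tnorm) (s : Tconorm)
    (P : Finset (Rule α)) {N N' : Set α} (hN : N ⊆ N') :
    ∃ m, ∀ j ≥ m, (softC t s P (N'.indicator 1))^[j] ((consequence P N).lfp.indicator 1) =
      (consequence P N').lfp.indicator 1 :=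
  have postfixed : (consequence P N).lfp ⊆ consequence P N' (consequence P N).lfp :=
    (consequence P N).map_lfp.ge.trans ((consequence P).monotone hN _)
  exists_forall_ge_iterate_softC_eq_lfp t s P postfixed (lfp_consequence_mono P hN)

theorem isModel_reduct_iff {P : Finset (Rule α)} {S M : Set α} :
    isModel (reduct P S) M ↔ consequence P Sᶜ M ⊆ M := by
  constructor
  · rintro hM _ ⟨r, hr, rfl, hpos, hneg⟩
    exact hM ⟨r.head, r.pos, ∅⟩ ⟨r, hr, fun b hb => hneg hb, rfl⟩ hpos (by simp)
  · rintro hM _ ⟨r, hr, hneg, rfl⟩ hpos -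
    exact hM ⟨r, hr, rfl, hpos, fun b hb => hneg b hb⟩

theorem isStableModel_iff_lfp_eq {P : Finset (Rule α)} {S : Set α} :
    isStableModel P S ↔ (consequence P Sᶜ).lfp = S := by
  simp only [isStableModel, isModel_reduct_iff]
  exact (consequence P Sᶜ).isLeast_lfp_le.isLeast_iff_eq

end Consequence

section Decision

variable {α : Type}

theorem undec_indicator (t : Tnorm) (A N : Set α) :
    undec t (A.indicator 1) (N.indicator 1) = (A ∪ N)ᶜ.indicator 1 := by
  funext a
  by_cases hA : a ∈ A <;> by_cases hN : a ∈ N <;>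
    simp [undec, hA, hN, t.one_left, t.zero_left]

theorem coe_indicator_union_eq_add_undec_mul (t : Tnorm) {A D : Set α} (hAD : Disjoint A D)
    (N : Set α) (a : α) :
    (((N ∪ D).indicator 1 a : unitInterval) : ℝ) = (N.indicator 1 a : unitInterval) +
      undec t (A.indicator 1) (N.indicator 1) a * (D.indicator 1 a : unitInterval) := by
  rw [undec_indicator]
  by_cases hD : a ∈ D
  · have hA : a ∉ A := hAD.notMem_of_mem_right hD
    by_cases hN : a ∈ N <;> simp [hA, hD, hN]
  · by_cases hN : a ∈ N <;> simp [hD, hN]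

theorem indicator_eq_one_and_compl_eq_zero_or (S : Set α) (a : α) :
    ((S.indicator 1 a : unitInterval) = 1 ∧ (Sᶜ.indicator 1 a : unitInterval) = 0) ∨
      ((S.indicator 1 a : unitInterval) = 0 ∧ (Sᶜ.indicator 1 a : unitInterval) = 1) := by
  by_cases ha : a ∈ S <;> simp [ha]

theorem membershipScore_indicator_compl (S : Set α) (a : α) :
    (((S.indicator 1 a : unitInterval) : ℝ) + 1 - (Sᶜ.indicator 1 a : unitInterval)) / 2 =
      S.indicator 1 a := by
  by_cases ha : a ∈ S <;> simp [ha]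

end Decision

theorem stable_model_reached_by_binary_ndprop_run_general {α : Type} [DecidableEq α]
    (t : Tnorm) (s : Tconorm) (P : Finset (Rule α)) (S : Set α)
    (hS : isStableModel P S) :
    ∃ (m : ℕ) (δ τs φs : ℕ → α → unitInterval),
      (∀ k a, δ k a = 0 ∨ δ k a = 1) ∧
      (∃ m0 : ℕ, ∀ j ≥ m0, (softC t s P (fun _ => 0))^[j] (fun _ => 0) = τs 0) ∧
      φs 0 = (fun _ => (0 : unitInterval)) ∧
      (∀ k, 1 ≤ k → k ≤ m →
        (∀ a, (φs k a : ℝ) =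
          (φs (k-1) a : ℝ) + (undec t (τs (k-1)) (φs (k-1)) a : ℝ) * (δ k a : ℝ)) ∧
        (∃ m1 : ℕ, ∀ j ≥ m1, (softC t s P (φs k))^[j] (τs (k-1)) = τs k)) ∧
      (∀ a, (τs m a = 1 ∧ φs m a = 0) ∨ (τs m a = 0 ∧ φs m a = 1)) ∧
      (∀ a, ((τs m a : ℝ) + 1 - (φs m a : ℝ)) / 2 = 0 ∨
            ((τs m a : ℝ) + 1 - (φs m a : ℝ)) / 2 = 1) ∧
      { a | ((τs m a : ℝ) + 1 - (φs m a : ℝ)) / 2 = 1 } = S := by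
  have lfp_eq : (consequence P Sᶜ).lfp = S := isStableModel_iff_lfp_eq.1 hS
  let T : Set α := (consequence P ∅).lfp
  have T_subset : T ⊆ S := (lfp_consequence_mono P (Set.empty_subset _)).trans_eq lfp_eq
  have init := exists_forall_ge_iterate_softC_eq_lfp t s P (N := ∅) (Set.empty_subset _)
    (Set.empty_subset _)
  have step := exists_forall_ge_iterate_softC_lfp_eq_lfp t s P (Set.empty_subset Sᶜ)
  rw [Set.indicator_empty] at init
  rw [lfp_eq] at step
  refine ⟨1, fun _ => Sᶜ.indicator 1, fun | 0 => T.indicator 1 | _ + 1 => S.indicator 1,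
    fun | 0 => fun _ => 0 | _ + 1 => Sᶜ.indicator 1, fun _ => Set.indicator_eq_zero_or_self _ _,
    init, rfl, fun k hk hk1 => ?_, indicator_eq_one_and_compl_eq_zero_or S, ?_, ?_⟩
  · obtain rfl : k = 1 := hk1.antisymm hk
    refine ⟨fun a => ?_, step⟩
    simpa using coe_indicator_union_eq_add_undec_mul t
      (Set.disjoint_compl_right_iff_subset.2 T_subset) ∅ a
  · simp only [membershipScore_indicator_compl]
    exact Set.indicator_eq_zero_or_self _ _
  · simp only [membershipScore_indicator_compl, Set.indicator_eq_one_iff_mem, Set.ofPred_mem_eq]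

/-- Every stable model `S` of `P` is reached by some NDProp run with
finitely many binary decision vectors: `τ⁰ = 𝒞_{P,0}^∞(0)`, `φ⁰ = 0`, and for
`1 ≤ k ≤ m`: `φ^k = φ^{k-1} + (μ^{k-1} ⊙ δ^k)` with
`μ^{k-1} = (1−τ^{k-1}) ⊗ (1−φ^{k-1})`, and `τ^k = 𝒞_{P,φ^k}^∞(τ^{k-1})`; the run
terminates with binary terminal degrees `(τ^m_i, φ^m_i) ∈ {(1,0),(0,1)}`, binary
membership score `p`, and `[p] = S`. -/
theorem stable_model_reached_by_binary_ndprop_run {α : Type} [Fintype α] [DecidableEq α]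
    (t : Tnorm) (s : Tconorm) (P : Finset (Rule α)) (S : Set α)
    (hS : isStableModel P S) :
    ∃ (m : ℕ) (δ τs φs : ℕ → α → unitInterval),
      (∀ k a, δ k a = 0 ∨ δ k a = 1) ∧
      (∃ m0 : ℕ, ∀ j ≥ m0, (softC t s P (fun _ => 0))^[j] (fun _ => 0) = τs 0) ∧
      φs 0 = (fun _ => (0 : unitInterval)) ∧
      (∀ k, 1 ≤ k → k ≤ m →
        (∀ a, (φs k a : ℝ) =
          (φs (k-1) a : ℝ) + (undec t (τs (k-1)) (φs (k-1)) a : ℝ) * (δ k a : ℝ)) ∧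
        (∃ m1 : ℕ, ∀ j ≥ m1, (softC t s P (φs k))^[j] (τs (k-1)) = τs k)) ∧
      (∀ a, (τs m a = 1 ∧ φs m a = 0) ∨ (τs m a = 0 ∧ φs m a = 1)) ∧
      (∀ a, ((τs m a : ℝ) + 1 - (φs m a : ℝ)) / 2 = 0 ∨
            ((τs m a : ℝ) + 1 - (φs m a : ℝ)) / 2 = 1) ∧
      { a | ((τs m a : ℝ) + 1 - (φs m a : ℝ)) / 2 = 1 } = S :=
  stable_model_reached_by_binary_ndprop_run_general t s P S hS
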